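/- Under the n-dimensional diagonal two-step trust-region setup, if K = Diag{κ⁽¹⁾, …, κ⁽ⁿ⁾} is a diagonal matrix with K(x̃₁ − x₁) = x₁ − x₀, then x̃₂ − x₂ = (I + ω̃₁ (B + ω̃₂I)⁻¹ (I + K) − ω₁ (A + ω₂I)⁻¹ K)(x̃₁ − x₁); equivalently, for each i, x̃₂⁽ⁱ⁾ − x₂⁽ⁱ⁾ = (1 + ω̃₁(1 + κ⁽ⁱ⁾)/(b⁽ⁱ⁾ + ω̃₂) − ω₁κ⁽ⁱ⁾/(a⁽ⁱ⁾ + ω₂)) · (x̃₁⁽ⁱ⁾ − x₁⁽ⁱ⁾). -/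

import Mathlib

/-!
After a first step `x₁ = x₀ - (H + ω₁ I)⁻¹ g`, the optimality condition `(H + ω₁ I) (x₁ - x₀) = -g`
says that the new gradient `g + H (x₁ - x₀)` is just `-ω₁ (x₁ - x₀)`. A second step therefore adds
`ω₁ (H + ω₂ I)⁻¹ (x₁ - x₀)`, whatever `g` is. Subtracting the second iterates of two models and
expressing both first displacements through the gap of the first iterates, as
`x₁ - x₀ = K (x̃₁ - x₁)` and `x̃₁ - x₀ = (I + K) (x̃₁ - x₁)`, gives the recursion for the gap.
-/

open Matrix

section Steps

variable {ι R : Type*} [Fintype ι] [DecidableEq ι] [CommRing R]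

/-- The trust-region step `x - (H + ω I)⁻¹ g` from `x`, for a quadratic model with Hessian `H` and
gradient `g` at `x`, where `ω` is the multiplier of the trust-region constraint. If `H + ω I`
is not invertible, its inverse is `0` by convention and the step stays at `x`. -/
noncomputable def trustRegionStep (H : Matrix ι ι R) (ω : R) (g x : ι → R) : ι → R :=
  x - (H + ω • 1)⁻¹ *ᵥ g

/-- The second of two successive trust-region steps, with multipliers `ω₁` and `ω₂`, for a quadratic
model with Hessian `H` and gradient `g` at the starting point `x`. The gradient at the intermediate
point `y` is `g + H (y - x)` because the model is quadratic. -/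
noncomputable def trustRegionTwoStep (H : Matrix ι ι R) (ω₁ ω₂ : R) (g x : ι → R) : ι → R :=
  trustRegionStep H ω₂ (g + H *ᵥ (trustRegionStep H ω₁ g x - x)) (trustRegionStep H ω₁ g x)

/-- The matrix `I + ω₁' (B + ω₂' I)⁻¹ (I + K) - ω₁ (A + ω₂ I)⁻¹ K` which carries the gap between
the first iterates of two models, with Hessians `A` and `B`, to the gap between their second
iterates, when `K` carries the first gap to the first displacement of the model with Hessian `A`.
The primed multipliers belong to `B`. -/
noncomputable def trustRegionGapMatrix (A B K : Matrix ι ι R) (ω₁ ω₂ ω₁' ω₂' : R) : Matrix ι ι R :=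
  1 + ω₁' • ((B + ω₂' • 1)⁻¹ * (1 + K)) - ω₁ • ((A + ω₂ • 1)⁻¹ * K)

theorem add_mulVec_trustRegionStep_sub {H : Matrix ι ι R} {ω : R} (hH : IsUnit (H + ω • 1))
    (g x : ι → R) :
    g + H *ᵥ (trustRegionStep H ω g x - x) = -(ω • (trustRegionStep H ω g x - x)) := by
  have optimality : (H + ω • 1) *ᵥ (trustRegionStep H ω g x - x) = -g := by
    rw [trustRegionStep, sub_sub_cancel_left, mulVec_neg, mulVec_mulVec,
      mul_nonsing_inv _ ((isUnit_iff_isUnit_det _).mp hH), one_mulVec]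
  rw [add_mulVec, smul_mulVec, one_mulVec] at optimality
  rw [eq_sub_of_add_eq optimality]
  abel

theorem trustRegionTwoStep_eq_add {H : Matrix ι ι R} {ω₁ : R} (hH : IsUnit (H + ω₁ • 1))
    (ω₂ : R) (g x : ι → R) :
    trustRegionTwoStep H ω₁ ω₂ g x =
      trustRegionStep H ω₁ g x + ω₁ • (H + ω₂ • 1)⁻¹ *ᵥ (trustRegionStep H ω₁ g x - x) := by
  rw [trustRegionTwoStep, add_mulVec_trustRegionStep_sub hH, trustRegionStep, mulVec_neg,
    mulVec_smul, sub_neg_eq_add]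

theorem trustRegionTwoStep_sub {A B K : Matrix ι ι R} {ω₁ ω₁' : R}
    (hA : IsUnit (A + ω₁ • 1)) (hB : IsUnit (B + ω₁' • 1)) (ω₂ ω₂' : R) {g g' x : ι → R}
    (hK : K *ᵥ (trustRegionStep B ω₁' g' x - trustRegionStep A ω₁ g x) =
      trustRegionStep A ω₁ g x - x) :
    trustRegionTwoStep B ω₁' ω₂' g' x - trustRegionTwoStep A ω₁ ω₂ g x =
      trustRegionGapMatrix A B K ω₁ ω₂ ω₁' ω₂' *ᵥ
        (trustRegionStep B ω₁' g' x - trustRegionStep A ω₁ g x) := by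
  rw [trustRegionTwoStep_eq_add hA, trustRegionTwoStep_eq_add hB]
  set x₁ := trustRegionStep A ω₁ g x
  set x₁' := trustRegionStep B ω₁' g' x
  have hK' : (1 + K) *ᵥ (x₁' - x₁) = x₁' - x := by
    rw [add_mulVec, one_mulVec, hK, sub_add_sub_cancel]
  rw [trustRegionGapMatrix, sub_mulVec, add_mulVec, one_mulVec, smul_mulVec, smul_mulVec,
    ← mulVec_mulVec, ← mulVec_mulVec, hK, hK']
  abel

end Steps

section Diagonal

variable {ι 𝕜 : Type*} [Fintype ι] [DecidableEq ι] [Field 𝕜]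

theorem isUnit_diagonal_add_smul_one {d : ι → 𝕜} {ω : 𝕜} (h : ∀ i, d i + ω ≠ 0) :
    IsUnit (diagonal d + ω • 1) := by
  rw [smul_one_eq_diagonal, diagonal_add, isUnit_diagonal, Pi.isUnit_iff]
  exact fun i => (h i).isUnit

theorem inv_diagonal_add_smul_one {d : ι → 𝕜} {ω : 𝕜} (h : ∀ i, d i + ω ≠ 0) :
    (diagonal d + ω • 1)⁻¹ = diagonal fun i => (d i + ω)⁻¹ := by
  refine inv_eq_right_inv ?_
  rw [smul_one_eq_diagonal, diagonal_add, diagonal_mul_diagonal, ← diagonal_one]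
  exact congrArg diagonal (funext fun i => mul_inv_cancel₀ (h i))

theorem trustRegionGapMatrix_diagonal {a b : ι → 𝕜} {ω₂ ω₂' : 𝕜}
    (ha : ∀ i, a i + ω₂ ≠ 0) (hb : ∀ i, b i + ω₂' ≠ 0) (ω₁ ω₁' : 𝕜) (κ : ι → 𝕜) :
    trustRegionGapMatrix (diagonal a) (diagonal b) (diagonal κ) ω₁ ω₂ ω₁' ω₂' =
      diagonal fun i => 1 + ω₁' * (1 + κ i) / (b i + ω₂') - ω₁ * κ i / (a i + ω₂) := by
  rw [trustRegionGapMatrix, inv_diagonal_add_smul_one ha, inv_diagonal_add_smul_one hb]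
  simp only [← diagonal_one, diagonal_add, diagonal_sub, diagonal_mul_diagonal, ← diagonal_smul]
  congr 1
  funext i
  simp only [Pi.smul_apply, smul_eq_mul]
  ring

theorem stmt_7_general {a b gf gQ x₀ : ι → 𝕜} {ω₁ ω₁t ω₂ ω₂t : 𝕜}
    (ha1 : ∀ i, a i + ω₁ ≠ 0) (hb1 : ∀ i, b i + ω₁t ≠ 0)
    (ha2 : ∀ i, a i + ω₂ ≠ 0) (hb2 : ∀ i, b i + ω₂t ≠ 0)
    {x₁ x₁t x₂ x₂t : ι → 𝕜}
    (hx₁ : x₁ = x₀ - (diagonal a + ω₁ • 1)⁻¹ *ᵥ gf)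
    (hx₁t : x₁t = x₀ - (diagonal b + ω₁t • 1)⁻¹ *ᵥ gQ)
    (hx₂ : x₂ = x₁ - (diagonal a + ω₂ • 1)⁻¹ *ᵥ (gf + diagonal a *ᵥ (x₁ - x₀)))
    (hx₂t : x₂t = x₁t - (diagonal b + ω₂t • 1)⁻¹ *ᵥ (gQ + diagonal b *ᵥ (x₁t - x₀)))
    {κ : ι → 𝕜} (hκ : diagonal κ *ᵥ (x₁t - x₁) = x₁ - x₀) :
    x₂t - x₂ =
      (1 + ω₁t • ((diagonal b + ω₂t • 1)⁻¹ * (1 + diagonal κ))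
        - ω₁ • ((diagonal a + ω₂ • 1)⁻¹ * diagonal κ)) *ᵥ (x₁t - x₁) ∧
    ∀ i, x₂t i - x₂ i =
      (1 + ω₁t * (1 + κ i) / (b i + ω₂t) - ω₁ * κ i / (a i + ω₂)) * (x₁t i - x₁ i) := by
  subst hx₁ hx₁t hx₂ hx₂t
  have gap := trustRegionTwoStep_sub (isUnit_diagonal_add_smul_one ha1)
    (isUnit_diagonal_add_smul_one hb1) ω₂ ω₂t hκ
  refine ⟨gap, fun i => ?_⟩
  rw [trustRegionGapMatrix_diagonal ha2 hb2] at gap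
  exact (congrFun gap i).trans (mulVec_diagonal _ _ i)

end Diagonal

/-- In the `n`-dimensional diagonal two-step trust-region setup, if
`K (x̃₁ − x₁) = x₁ − x₀` for a diagonal matrix `K = Diag κ`, then
`x̃₂ − x₂ = (I + ω̃₁ (B + ω̃₂I)⁻¹ (I + K) − ω₁ (A + ω₂I)⁻¹ K)(x̃₁ − x₁)`,
equivalently, componentwise
`x̃₂⁽ⁱ⁾ − x₂⁽ⁱ⁾ = (1 + ω̃₁(1 + κ⁽ⁱ⁾)/(b⁽ⁱ⁾ + ω̃₂) − ω₁κ⁽ⁱ⁾/(a⁽ⁱ⁾ + ω₂)) (x̃₁⁽ⁱ⁾ − x₁⁽ⁱ⁾)`. -/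
theorem stmt_7 (n : ℕ) (hn : 1 ≤ n) (a b : Fin n → ℝ) (gf gQ x₀ : Fin n → ℝ)
    (ω₁ ω₁t ω₂ ω₂t : ℝ)
    (hω₁ : 0 < ω₁) (hω₁t : 0 < ω₁t) (hω₂ : 0 < ω₂) (hω₂t : 0 < ω₂t)
    (ha1 : ∀ i, a i + ω₁ ≠ 0) (hb1 : ∀ i, b i + ω₁t ≠ 0)
    (ha2 : ∀ i, 0 < a i + ω₂) (hb2 : ∀ i, 0 < b i + ω₂t)
    (x₁ x₁t x₂ x₂t : Fin n → ℝ)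
    (hx₁ : x₁ = x₀ - (Matrix.diagonal a + ω₁ • 1)⁻¹.mulVec gf)
    (hx₁t : x₁t = x₀ - (Matrix.diagonal b + ω₁t • 1)⁻¹.mulVec gQ)
    (hx₂ : x₂ = x₁ -
      (Matrix.diagonal a + ω₂ • 1)⁻¹.mulVec (gf + (Matrix.diagonal a).mulVec (x₁ - x₀)))
    (hx₂t : x₂t = x₁t -
      (Matrix.diagonal b + ω₂t • 1)⁻¹.mulVec (gQ + (Matrix.diagonal b).mulVec (x₁t - x₀)))
    (κ : Fin n → ℝ)
    (hκ : (Matrix.diagonal κ).mulVec (x₁t - x₁) = x₁ - x₀) :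
    x₂t - x₂ =
      (1 + ω₁t • ((Matrix.diagonal b + ω₂t • 1)⁻¹ * (1 + Matrix.diagonal κ))
        - ω₁ • ((Matrix.diagonal a + ω₂ • 1)⁻¹ * Matrix.diagonal κ)).mulVec (x₁t - x₁) ∧
    ∀ i, x₂t i - x₂ i =
      (1 + ω₁t * (1 + κ i) / (b i + ω₂t) - ω₁ * κ i / (a i + ω₂)) * (x₁t i - x₁ i) := by
  exact stmt_7_general ha1 hb1 (fun i => (ha2 i).ne') (fun i => (hb2 i).ne') hx₁ hx₁t hx₂ hx₂t hκ
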